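/- Under the hypotheses (H1)–(H3) on the pressure P, with k(ρ) = ∫₀^ρ √(P'(y))/y dy, λ₁ = (3−γ₁)/(2(γ₁−1)), M_{λ₁} = (2λ₁ (2λ₁+1)^{−1/2} ∫_{−1}^{1} (1−z²)^{λ₁} dz)^{−1}, a₁(ρ) = M_{λ₁} k(ρ)^{−λ₁} k'(ρ)^{−1/2}, and a₂(ρ) = −(4(λ₁+1))^{−1} k(ρ)^{−λ₁−1} k'(ρ)^{−1/2} ∫₀^ρ k(s)^{λ₁} k'(s)^{−1/2} a₁''(s) ds, there exist a constant C > 0 and a threshold ρ̄ ≥ ρ^* such that, with θ₁ = (γ₁−1)/2 and θ₂ = (γ₂−1)/2, for all ρ ≥ ρ̄: |a₁(ρ)| + ρ|a₁'(ρ)| + ρ²|a₁''(ρ)| ≤ C ρ^{1/2 − θ₂/(2θ₁)} and |a₂(ρ)| + ρ|a₂'(ρ)| + ρ²|a₂''(ρ)| ≤ C ρ^{1/2 − θ₂ − θ₂/(2θ₁)}; in particular |a₁(ρ)| + ρ^{θ₂}|a₂(ρ)| ≤ C ρ^{1/2 − θ₂/(2θ₁)}. -/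

import Mathlib

open Set MeasureTheory Filter

/-!
Both `k` and the weights `k ^ μ * (k') ^ (-1/2)` inherit from `P` a leading power with a symbol-type
relative error, at vacuum as well as at infinity. At infinity this gives the estimate of `a₁`; the
integrand of `a₂` is then a symbol of order `-θ₂ - 1`, so the integral is bounded and `a₂` gains the
factor `ρ ^ (-θ₂)` from its prefactor. That the integral converges at vacuum rests on a
cancellation: for this value of `λ₁` the leading power of `a₁` there is a constant, so `a₁''` only
sees the relative error `O(ρ ^ (2 * θ₁))`, and the integrand is `O(ρ ^ (θ₁ - 1))`.
-/

open Topology Asymptotics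

/-- A filter on `ℝ` that lives on `(0, ∞)` and is generated by open sets. Only `atTop` and `𝓝[>] 0`
are needed; the class lets the calculus of symbols be developed once for both ends of the
half-line. -/
class IsPositiveEnd (l : Filter ℝ) : Prop where
  eventually_pos : ∀ᶠ x in l, 0 < x
  eventually_eventually_nhds {p : ℝ → Prop} : (∀ᶠ x in l, p x) → ∀ᶠ x in l, ∀ᶠ y in 𝓝 x, p y

instance : IsPositiveEnd atTop where
  eventually_pos := eventually_gt_atTop 0
  eventually_eventually_nhds h := by
    obtain ⟨R, hR⟩ := eventually_atTop.1 h
    filter_upwards [eventually_gt_atTop R] with x hx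
    filter_upwards [lt_mem_nhds hx] with y hy using hR y hy.le

instance : IsPositiveEnd (𝓝[>] 0) where
  eventually_pos := self_mem_nhdsWithin
  eventually_eventually_nhds h := by
    filter_upwards [eventually_eventually_nhdsWithin.2 h, self_mem_nhdsWithin] with x hx hx0
    rwa [IsOpen.nhdsWithin_eq isOpen_Ioi hx0] at hx

/-- `f` is a symbol of order `m` along `l`, up to `n` derivatives: `f` is eventually `C^n`, and its
`j`-th derivative is `O(x ^ (m - j))` for every `j ≤ n`. -/
def IsSymbol (l : Filter ℝ) (n : ℕ) (m : ℝ) (f : ℝ → ℝ) : Prop :=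
  (∀ᶠ x in l, ContDiffAt ℝ n f x) ∧ ∀ j ≤ n, iteratedDeriv j f =O[l] fun x ↦ x ^ (m - j)

/-- `f` behaves along `l` like the power `c * x ^ m`, with a relative error that is a symbol of
order `δ`. It is an asymptotic expansion only when `x ^ δ → 0` along `l`, that is, for `δ < 0` at
infinity and for `δ > 0` at zero. -/
def HasPowerExpansion (l : Filter ℝ) (n : ℕ) (c m δ : ℝ) (f : ℝ → ℝ) : Prop :=
  ∃ r : ℝ → ℝ, IsSymbol l n δ r ∧ f =ᶠ[l] fun x ↦ c * x ^ m * (1 + r x)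

section Symbols

variable {l : Filter ℝ} {n : ℕ} {m m' : ℝ} {f f' g : ℝ → ℝ}

lemma IsSymbol.isBigO (h : IsSymbol l n m f) : f =O[l] fun x ↦ x ^ m := by
  simpa using h.2 0 n.zero_le

lemma IsSymbol.of_le {n' : ℕ} (h : IsSymbol l n m f) (hn : n' ≤ n) : IsSymbol l n' m f :=
  ⟨h.1.mono fun _ hx ↦ hx.of_le (mod_cast hn), fun j hj ↦ h.2 j (hj.trans hn)⟩

lemma IsSymbol.add (hf : IsSymbol l n m f) (hg : IsSymbol l n m g) :
    IsSymbol l n m fun x ↦ f x + g x := by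
  refine ⟨hf.1.mp (hg.1.mono fun x hgx hfx ↦ hfx.add hgx), fun j hj ↦ ?_⟩
  refine ((hf.2 j hj).add (hg.2 j hj)).congr' ?_ .rfl
  filter_upwards [hf.1, hg.1] with x hfx hgx
  exact (iteratedDeriv_fun_add (hfx.of_le (mod_cast hj)) (hgx.of_le (mod_cast hj))).symm

lemma IsSymbol.const_mul (c : ℝ) (hf : IsSymbol l n m f) : IsSymbol l n m fun x ↦ c * f x := by
  refine ⟨hf.1.mono fun x hx ↦ contDiffAt_const.mul hx, fun j hj ↦ ?_⟩
  refine ((hf.2 j hj).const_mul_left c).congr_left fun x ↦ ?_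
  exact (iteratedDeriv_const_mul_field c f).symm

lemma IsSymbol.eventually_hasDerivAt (h : IsSymbol l (n + 1) m f) :
    ∀ᶠ x in l, HasDerivAt f (deriv f x) x :=
  h.1.mono fun _ hx ↦ (hx.differentiableAt (by simp)).hasDerivAt

protected lemma IsSymbol.deriv (h : IsSymbol l (n + 1) m f) : IsSymbol l n (m - 1) (deriv f) := by
  refine ⟨h.1.mono fun x hx ↦ hx.derivWithin (by norm_cast), fun j hj ↦ ?_⟩
  rw [← iteratedDeriv_succ', sub_sub, add_comm (1 : ℝ)]
  exact mod_cast h.2 (j + 1) (by lia)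

lemma IsSymbol.tendsto_zero (hf : IsSymbol l n m f)
    (hm : Tendsto (fun x : ℝ ↦ x ^ m) l (𝓝 0)) : Tendsto f l (𝓝 0) :=
  hf.isBigO.trans_tendsto hm

lemma IsSymbol.eventually_one_add_pos (hf : IsSymbol l n m f)
    (hm : Tendsto (fun x : ℝ ↦ x ^ m) l (𝓝 0)) : ∀ᶠ x in l, 0 < 1 + f x :=
  ((hf.tendsto_zero hm).eventually (lt_mem_nhds neg_one_lt_zero)).mono fun _ hx ↦ by linarith

lemma isBigO_one_add_rpow_sub_one (p : ℝ) :
    (fun y : ℝ ↦ (1 + y) ^ p - 1) =O[𝓝 0] fun y ↦ y := by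
  have hderiv : DifferentiableAt ℝ (fun y : ℝ ↦ (1 + y) ^ p) 0 := by
    fun_prop (disch := norm_num)
  simpa using hderiv.isBigO_sub

lemma contDiffAt_succ_of_eventually_hasDerivAt {x : ℝ} (hf : ∀ᶠ y in 𝓝 x, HasDerivAt f (f' y) y)
    (hf' : ContDiffAt ℝ n f' x) : ContDiffAt ℝ (n + 1) f x :=
  contDiffAt_succ_iff_hasFDerivAt.2
    ⟨fun y ↦ (1 : ℝ →L[ℝ] ℝ).smulRight (f' y), ⟨_, hf, fun _ hy ↦ hy.hasFDerivAt⟩,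
      contDiffAt_const.smulRight hf'⟩

variable [IsPositiveEnd l]

lemma rpow_mul_rpow_eventuallyEq (a b : ℝ) :
    (fun x : ℝ ↦ x ^ a * x ^ b) =ᶠ[l] fun x ↦ x ^ (a + b) :=
  IsPositiveEnd.eventually_pos.mono fun _ hx ↦ (Real.rpow_add hx a b).symm

lemma isBigO_mul_rpow_add (hf : f =O[l] fun x ↦ x ^ m) (hg : g =O[l] fun x ↦ x ^ m') :
    (fun x ↦ f x * g x) =O[l] fun x ↦ x ^ (m + m') :=
  (hf.mul hg).congr' .rfl (rpow_mul_rpow_eventuallyEq m m')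

lemma IsSymbol.congr (h : IsSymbol l n m f) (hfg : f =ᶠ[l] g) : IsSymbol l n m g := by
  have hnhds := IsPositiveEnd.eventually_eventually_nhds hfg
  refine ⟨?_, fun j hj ↦ (h.2 j hj).congr' ?_ .rfl⟩
  · filter_upwards [h.1, hnhds] with x hx hfgx
    exact hx.congr_of_eventuallyEq (EventuallyEq.symm hfgx)
  · filter_upwards [hnhds] with x hfgx using Filter.EventuallyEq.iteratedDeriv_eq j hfgx

lemma IsSymbol.mono (h : IsSymbol l n m f) (hm : (fun x : ℝ ↦ x ^ m) =O[l] fun x ↦ x ^ m') :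
    IsSymbol l n m' f := by
  refine ⟨h.1, fun j hj ↦ (h.2 j hj).trans ?_⟩
  exact (hm.mul (isBigO_refl (fun x : ℝ ↦ x ^ (-(j : ℝ))) l)).congr'
    (rpow_mul_rpow_eventuallyEq m (-j)) (rpow_mul_rpow_eventuallyEq m' (-j))

lemma IsSymbol.mul (hf : IsSymbol l n m f) (hg : IsSymbol l n m' g) :
    IsSymbol l n (m + m') fun x ↦ f x * g x := by
  refine ⟨hf.1.mp (hg.1.mono fun x hgx hfx ↦ hfx.mul hgx), fun j hj ↦ ?_⟩
  have hterm (i : ℕ) (hi : i ∈ Finset.range (j + 1)) :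
      (fun x ↦ j.choose i * iteratedDeriv i f x * iteratedDeriv (j - i) g x)
        =O[l] fun x ↦ x ^ (m + m' - j) := by
    have hij : i ≤ j := Finset.mem_range_succ_iff.1 hi
    have hprod := isBigO_mul_rpow_add (hf.2 i (hij.trans hj)) (hg.2 (j - i) (by lia))
    rw [Nat.cast_sub hij, show m - i + (m' - (j - i)) = m + m' - (j : ℝ) by ring] at hprod
    simpa only [mul_assoc] using hprod.const_mul_left (j.choose i : ℝ)
  refine (IsBigO.fun_sum hterm).congr' ?_ .rfl
  filter_upwards [hf.1, hg.1] with x hfx hgx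
  exact (iteratedDeriv_fun_mul (hfx.of_le (mod_cast hj)) (hgx.of_le (mod_cast hj))).symm

lemma IsSymbol.mul_of_tendsto_zero (hf : IsSymbol l n m f)
    (hm : Tendsto (fun x : ℝ ↦ x ^ m) l (𝓝 0)) (hg : IsSymbol l n m' g) :
    IsSymbol l n m' fun x ↦ f x * g x := by
  have hf0 : IsSymbol l n 0 f := hf.mono (by simpa using hm.isBigO_one ℝ)
  simpa only [zero_add] using hf0.mul hg

lemma isSymbol_rpow (n : ℕ) (m : ℝ) : IsSymbol l n m fun x ↦ x ^ m := by
  refine ⟨IsPositiveEnd.eventually_pos.mono fun x hx ↦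
    Real.contDiffAt_rpow_const (.inl hx.ne'), fun j _ ↦ ?_⟩
  simp only [iteratedDeriv_eq_iterate, funext fun x ↦ Real.iter_deriv_rpow_const m x j]
  exact isBigO_const_mul_self _ _ _

lemma IsSymbol.of_hasDerivAt (hf : ∀ᶠ x in l, HasDerivAt f (f' x) x)
    (hf' : IsSymbol l n (m - 1) f') (hO : f =O[l] fun x ↦ x ^ m) : IsSymbol l (n + 1) m f := by
  constructor
  · filter_upwards [IsPositiveEnd.eventually_eventually_nhds hf, hf'.1] with x hfx hfx'
    exact contDiffAt_succ_of_eventually_hasDerivAt hfx hfx'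
  · have hderiv : IsSymbol l n (m - 1) (deriv f) :=
      hf'.congr (hf.mono fun _ hx ↦ hx.deriv.symm)
    rintro (_ | j) hj
    · simpa using hO
    · rw [iteratedDeriv_succ', Nat.cast_add_one, add_comm (j : ℝ), ← sub_sub]
      exact hderiv.2 j (by lia)

lemma IsSymbol.one_add_rpow_sub_one (hf : IsSymbol l n m f)
    (hm : Tendsto (fun x : ℝ ↦ x ^ m) l (𝓝 0)) (p : ℝ) :
    IsSymbol l n m fun x ↦ (1 + f x) ^ p - 1 := by
  have hO (p : ℝ) : (fun x ↦ (1 + f x) ^ p - 1) =O[l] fun x ↦ x ^ m :=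
    ((isBigO_one_add_rpow_sub_one p).comp_tendsto (hf.tendsto_zero hm)).trans hf.isBigO
  have hpos := hf.eventually_one_add_pos hm
  induction n generalizing p with
  | zero =>
    refine ⟨?_, fun j hj ↦ ?_⟩
    · filter_upwards [hf.1, hpos] with x hfx hx
      exact ((contDiffAt_const.add hfx).rpow_const_of_ne hx.ne').sub contDiffAt_const
    · obtain rfl : j = 0 := Nat.le_zero.1 hj
      simpa using hO p
  | succ n ih =>
    have hfactor : IsSymbol l n (m - 1) fun x ↦ ((1 + f x) ^ (p - 1) - 1) * deriv f x :=
      (ih (hf.of_le n.le_succ) (p - 1)).mul_of_tendsto_zero hm hf.deriv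
    refine .of_hasDerivAt ?_ ((hfactor.add hf.deriv).const_mul p) (hO p)
    filter_upwards [hf.eventually_hasDerivAt, hpos] with x hfx hx
    exact (((hfx.const_add 1).rpow_const (.inl hx.ne')).sub_const 1).congr_deriv (by ring)

lemma IsSymbol.exists_sum_pow_mul_abs_iteratedDeriv_le (hf : IsSymbol l n m f) :
    ∃ C, 0 < C ∧ ∀ᶠ x in l,
      ∑ j ∈ Finset.range (n + 1), x ^ j * |iteratedDeriv j f x| ≤ C * x ^ m := by
  have hsum : (fun x ↦ ∑ j ∈ Finset.range (n + 1), x ^ j * |iteratedDeriv j f x|)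
      =O[l] fun x ↦ x ^ m := by
    refine .fun_sum fun j hj ↦ ?_
    have hpow : (fun x : ℝ ↦ x ^ j) =O[l] fun x ↦ x ^ (j : ℝ) := by
      simpa only [Real.rpow_natCast] using isBigO_refl _ _
    simpa using isBigO_mul_rpow_add hpow (hf.2 j (Finset.mem_range_succ_iff.1 hj)).abs_left
  obtain ⟨C, hC, hbound⟩ := hsum.exists_pos
  refine ⟨C, hC, ?_⟩
  filter_upwards [hbound.bound, IsPositiveEnd.eventually_pos (l := l)] with x hx hx0
  rw [Real.norm_of_nonneg (Real.rpow_nonneg hx0.le m)] at hx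
  exact (Real.le_norm_self _).trans hx

end Symbols

section PowerExpansions

variable {l : Filter ℝ} {n : ℕ} {c c' m m' δ δ' : ℝ} {f f' g : ℝ → ℝ}

lemma HasPowerExpansion.congr (hf : HasPowerExpansion l n c m δ f) (hfg : f =ᶠ[l] g) :
    HasPowerExpansion l n c m δ g :=
  hf.imp fun _ ⟨hr, hfr⟩ ↦ ⟨hr, hfg.symm.trans hfr⟩

lemma HasPowerExpansion.of_le {n' : ℕ} (hf : HasPowerExpansion l n c m δ f) (hn : n' ≤ n) :
    HasPowerExpansion l n' c m δ f :=
  hf.imp fun _ ⟨hr, hfr⟩ ↦ ⟨hr.of_le hn, hfr⟩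

variable [IsPositiveEnd l]

lemma HasPowerExpansion.mono (hf : HasPowerExpansion l n c m δ f)
    (hδ : (fun x : ℝ ↦ x ^ δ) =O[l] fun x ↦ x ^ δ') : HasPowerExpansion l n c m δ' f :=
  hf.imp fun _ ⟨hr, hfr⟩ ↦ ⟨hr.mono hδ, hfr⟩

lemma hasPowerExpansion_rpow (n : ℕ) (p δ : ℝ) :
    HasPowerExpansion l n 1 p δ fun x ↦ x ^ p :=
  ⟨fun x ↦ 0 * x ^ δ, (isSymbol_rpow n δ).const_mul 0, .of_forall fun x ↦ by simp⟩

lemma HasPowerExpansion.isSymbol_sub (hf : HasPowerExpansion l n c m δ f) :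
    IsSymbol l n (m + δ) fun x ↦ f x - c * x ^ m := by
  obtain ⟨r, hr, hfr⟩ := hf
  refine (((isSymbol_rpow n m).mul hr).const_mul c).congr ?_
  filter_upwards [hfr] with x hx
  rw [hx]
  ring

lemma HasPowerExpansion.isSymbol_deriv_of_exponent_zero
    (hf : HasPowerExpansion l (n + 1) c 0 δ f) : IsSymbol l n (δ - 1) (deriv f) := by
  simpa using hf.isSymbol_sub.deriv

lemma IsSymbol.hasPowerExpansion (hc : c ≠ 0)
    (hf : IsSymbol l n (m + δ) fun x ↦ f x - c * x ^ m) : HasPowerExpansion l n c m δ f := by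
  refine ⟨fun x ↦ c⁻¹ * ((f x - c * x ^ m) * x ^ (-m)), ?_, ?_⟩
  · simpa only [add_neg_cancel_comm] using (hf.mul (isSymbol_rpow n (-m))).const_mul c⁻¹
  · filter_upwards [IsPositiveEnd.eventually_pos (l := l)] with x hx
    have hxm : x ^ m ≠ 0 := (Real.rpow_pos_of_pos hx m).ne'
    rw [Real.rpow_neg hx.le]
    field_simp
    ring

protected lemma HasPowerExpansion.deriv (hf : HasPowerExpansion l (n + 1) c m δ f)
    (hc : c ≠ 0) (hm : m ≠ 0) : HasPowerExpansion l n (c * m) (m - 1) δ (deriv f) := by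
  refine IsSymbol.hasPowerExpansion (mul_ne_zero hc hm) ?_
  rw [sub_add_eq_add_sub]
  have hsub := hf.isSymbol_sub
  refine hsub.deriv.congr ?_
  filter_upwards [hsub.eventually_hasDerivAt, IsPositiveEnd.eventually_pos (l := l)] with x hx hx0
  have hpow := (Real.hasDerivAt_rpow_const (p := m) (.inl hx0.ne')).const_mul c
  have hfx := (hx.add hpow).deriv
  simp only [Pi.add_def, sub_add_cancel] at hfx
  rw [hfx]
  ring

lemma eventually_hasDerivAt_sub_const_mul_rpow (hf : ∀ᶠ x in l, HasDerivAt f (f' x) x) :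
    ∀ᶠ x in l, HasDerivAt (fun y ↦ f y - c * y ^ m) (f' x - c * m * x ^ (m - 1)) x := by
  filter_upwards [hf, IsPositiveEnd.eventually_pos (l := l)] with x hx hx0
  exact (hx.sub ((Real.hasDerivAt_rpow_const (.inl hx0.ne')).const_mul c)).congr_deriv (by ring)

lemma HasPowerExpansion.of_hasDerivAt (hf : ∀ᶠ x in l, HasDerivAt f (f' x) x)
    (hf' : HasPowerExpansion l n (c * m) (m - 1) δ f') (hc : c ≠ 0)
    (hO : (fun x ↦ f x - c * x ^ m) =O[l] fun x ↦ x ^ (m + δ)) :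
    HasPowerExpansion l (n + 1) c m δ f := by
  have hf'sub := hf'.isSymbol_sub
  rw [sub_add_eq_add_sub] at hf'sub
  exact IsSymbol.hasPowerExpansion hc
    (.of_hasDerivAt (eventually_hasDerivAt_sub_const_mul_rpow hf) hf'sub hO)

variable (hδ : Tendsto (fun x : ℝ ↦ x ^ δ) l (𝓝 0))
include hδ

lemma HasPowerExpansion.isSymbol (hf : HasPowerExpansion l n c m δ f) : IsSymbol l n m f := by
  obtain ⟨r, hr, hfr⟩ := hf
  have hpow : IsSymbol l n m fun x ↦ x ^ m := isSymbol_rpow n m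
  refine ((hpow.add (hr.mul_of_tendsto_zero hδ hpow)).const_mul c).congr ?_
  filter_upwards [hfr] with x hx
  rw [hx]
  ring

lemma HasPowerExpansion.eventually_pos (hf : HasPowerExpansion l n c m δ f) (hc : 0 < c) :
    ∀ᶠ x in l, 0 < f x := by
  obtain ⟨r, hr, hfr⟩ := hf
  filter_upwards [hfr, hr.eventually_one_add_pos hδ, IsPositiveEnd.eventually_pos (l := l)]
    with x hx hrx hx0
  rw [hx]
  positivity

lemma HasPowerExpansion.mul (hf : HasPowerExpansion l n c m δ f)
    (hg : HasPowerExpansion l n c' m' δ g) :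
    HasPowerExpansion l n (c * c') (m + m') δ fun x ↦ f x * g x := by
  obtain ⟨r, hr, hfr⟩ := hf
  obtain ⟨s, hs, hgs⟩ := hg
  refine ⟨_, (hr.add hs).add (hr.mul_of_tendsto_zero hδ hs), ?_⟩
  filter_upwards [hfr, hgs, IsPositiveEnd.eventually_pos (l := l)] with x hfx hgx hx
  rw [hfx, hgx, Real.rpow_add hx]
  ring

lemma HasPowerExpansion.rpow (hf : HasPowerExpansion l n c m δ f) (hc : 0 < c) (p : ℝ) :
    HasPowerExpansion l n (c ^ p) (p * m) δ fun x ↦ f x ^ p := by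
  obtain ⟨r, hr, hfr⟩ := hf
  refine ⟨_, hr.one_add_rpow_sub_one hδ p, ?_⟩
  filter_upwards [hfr, hr.eventually_one_add_pos hδ, IsPositiveEnd.eventually_pos (l := l)]
    with x hx hrx hx0
  rw [hx, Real.mul_rpow (by positivity) hrx.le, Real.mul_rpow hc.le (by positivity),
    ← Real.rpow_mul hx0.le, mul_comm m p, add_sub_cancel]

end PowerExpansions

section Primitives

variable {m : ℝ} {f f' : ℝ → ℝ}

lemma abs_sub_le_of_abs_hasDerivAt_le_rpow {a b C : ℝ} (ha : 0 < a) (hab : a ≤ b) (hm : m ≠ 0)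
    (hf : ∀ x ∈ Icc a b, HasDerivAt f (f' x) x)
    (hbound : ∀ x ∈ Icc a b, |f' x| ≤ C * x ^ (m - 1)) :
    |f b - f a| ≤ C / m * (b ^ m - a ^ m) := by
  have hB (x : ℝ) (hx : x ∈ Icc a b) :
      HasDerivAt (fun y ↦ C / m * (y ^ m - a ^ m)) (C * x ^ (m - 1)) x :=
    (((Real.hasDerivAt_rpow_const (.inl (ha.trans_le hx.1).ne')).sub_const _).const_mul
      (C / m)).congr_deriv (by field)
  refine image_norm_le_of_norm_deriv_right_le_deriv_boundary' (f := fun x ↦ f x - f a)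
    (fun x hx ↦ ((hf x hx).sub_const _).continuousAt.continuousWithinAt)
    (fun x hx ↦ ((hf x (Ico_subset_Icc_self hx)).sub_const _).hasDerivWithinAt)
    (by simp) (fun x hx ↦ (hB x hx).continuousAt.continuousWithinAt)
    (fun x hx ↦ (hB x (Ico_subset_Icc_self hx)).hasDerivWithinAt)
    (fun x hx ↦ hbound x (Ico_subset_Icc_self hx)) (right_mem_Icc.2 hab)

lemma isBigO_rpow_rpow_atTop {p q : ℝ} (hpq : p ≤ q) :
    (fun x : ℝ ↦ x ^ p) =O[atTop] fun x ↦ x ^ q :=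
  .of_norm_eventuallyLE <| by
    filter_upwards [eventually_ge_atTop 1] with x hx
    rw [Real.norm_of_nonneg (by positivity)]
    exact Real.rpow_le_rpow_of_exponent_le hx hpq

lemma isBigO_rpow_max_of_hasDerivAt_atTop (hm : m ≠ 0)
    (hf : ∀ᶠ x in atTop, HasDerivAt f (f' x) x)
    (hO : f' =O[atTop] fun x ↦ x ^ (m - 1)) : f =O[atTop] fun x ↦ x ^ max m 0 := by
  obtain ⟨C, hC⟩ := hO.bound
  obtain ⟨R, hR⟩ := eventually_atTop.1 (hf.and (hC.and (eventually_gt_atTop 0)))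
  have hincr : ∀ᶠ x in atTop, ‖f x - f R‖ ≤ ‖C / m * (x ^ m - R ^ m)‖ := by
    filter_upwards [eventually_ge_atTop R] with x hx
    refine (abs_sub_le_of_abs_hasDerivAt_le_rpow (hR R le_rfl).2.2 hx hm
      (fun y hy ↦ (hR y hy.1).1) fun y hy ↦ ?_).trans (Real.le_norm_self _)
    obtain ⟨-, hy', hy0⟩ := hR y hy.1
    rwa [Real.norm_of_nonneg (by positivity : (0 : ℝ) ≤ y ^ (m - 1))] at hy'
  have hconst (c : ℝ) : (fun _ ↦ c) =O[atTop] fun x : ℝ ↦ x ^ max m 0 := by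
    simpa using (isBigO_rpow_rpow_atTop (le_max_right m 0)).const_mul_left c
  have hsub := (IsBigO.of_bound' hincr).trans
    (((isBigO_rpow_rpow_atTop (le_max_left m 0)).sub (hconst _)).const_mul_left (C / m))
  simpa using hsub.add (hconst (f R))

lemma tendsto_rpow_nhdsGT_zero (hm : 0 < m) : Tendsto (fun x : ℝ ↦ x ^ m) (𝓝[>] 0) (𝓝 0) := by
  simpa [hm.ne'] using (Real.continuousAt_rpow_const 0 m (.inr hm.le)).continuousWithinAt.tendsto

lemma isBigO_rpow_of_hasDerivAt_nhdsGT_zero (hm : 0 < m)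
    (hf : ∀ᶠ x in 𝓝[>] 0, HasDerivAt f (f' x) x) (hf0 : Tendsto f (𝓝[>] 0) (𝓝 0))
    (hO : f' =O[𝓝[>] 0] fun x ↦ x ^ (m - 1)) : f =O[𝓝[>] 0] fun x ↦ x ^ m := by
  obtain ⟨C, hC⟩ := hO.bound
  obtain ⟨R, hR0, hR⟩ := mem_nhdsGT_iff_exists_Ioo_subset.1 (hf.and hC)
  refine .of_bound (C / m) ?_
  filter_upwards [Ioo_mem_nhdsGT hR0] with x hx
  have hincr : ∀ᶠ a in 𝓝[>] 0, |f x - f a| ≤ C / m * (x ^ m - a ^ m) := by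
    filter_upwards [Ioo_mem_nhdsGT hx.1] with a ha
    have hsub (y : ℝ) (hy : y ∈ Icc a x) : y ∈ Ioo 0 R := ⟨ha.1.trans_le hy.1, hy.2.trans_lt hx.2⟩
    refine abs_sub_le_of_abs_hasDerivAt_le_rpow ha.1 ha.2.le hm.ne'
      (fun y hy ↦ (hR (hsub y hy)).1) fun y hy ↦ ?_
    have hy' := (hR (hsub y hy)).2
    rwa [Real.norm_of_nonneg (Real.rpow_nonneg (hsub y hy).1.le _)] at hy'
  have hlim := le_of_tendsto_of_tendsto (hf0.const_sub (f x)).abs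
    (((tendsto_rpow_nhdsGT_zero hm).const_sub (x ^ m)).const_mul (C / m)) hincr
  rwa [sub_zero, sub_zero, ← Real.norm_of_nonneg (Real.rpow_nonneg hx.1.le m)] at hlim

lemma HasPowerExpansion.of_hasDerivAt_atTop {n : ℕ} {c δ : ℝ} (hc : c ≠ 0) (hδ : 0 < m + δ)
    (hf : ∀ᶠ x in atTop, HasDerivAt f (f' x) x)
    (hf' : HasPowerExpansion atTop n (c * m) (m - 1) δ f') :
    HasPowerExpansion atTop (n + 1) c m δ f := by
  have hO := hf'.isSymbol_sub.isBigO
  rw [sub_add_eq_add_sub] at hO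
  refine .of_hasDerivAt hf hf' hc ?_
  simpa only [max_eq_left hδ.le] using isBigO_rpow_max_of_hasDerivAt_atTop hδ.ne'
    (eventually_hasDerivAt_sub_const_mul_rpow hf) hO

lemma HasPowerExpansion.of_hasDerivAt_nhdsGT_zero {n : ℕ} {c δ : ℝ} (hc : c ≠ 0) (hm : 0 < m)
    (hδ : 0 < m + δ) (hf : ∀ᶠ x in 𝓝[>] 0, HasDerivAt f (f' x) x)
    (hf0 : Tendsto f (𝓝[>] 0) (𝓝 0)) (hf' : HasPowerExpansion (𝓝[>] 0) n (c * m) (m - 1) δ f') :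
    HasPowerExpansion (𝓝[>] 0) (n + 1) c m δ f := by
  have hO := hf'.isSymbol_sub.isBigO
  rw [sub_add_eq_add_sub] at hO
  refine .of_hasDerivAt hf hf' hc (isBigO_rpow_of_hasDerivAt_nhdsGT_zero hδ
    (eventually_hasDerivAt_sub_const_mul_rpow hf) ?_ hO)
  simpa using hf0.sub ((tendsto_rpow_nhdsGT_zero hm).const_mul c)

end Primitives

section EntropyWeight

variable {l : Filter ℝ} {n : ℕ} {c m δ θ : ℝ} {f k P : ℝ → ℝ}

/-- The factor `k ^ μ * (k') ^ (-1/2)` shared by all coefficients of the entropy kernel: `μ = -λ₁`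
in `a₁`, `μ = -λ₁ - 1` in front of the integral in `a₂`, and `μ = λ₁` inside that integral. -/
noncomputable def entropyWeight (μ : ℝ) (k : ℝ → ℝ) (ρ : ℝ) : ℝ :=
  k ρ ^ μ * deriv k ρ ^ (-(1 : ℝ) / 2)

/-- The integrand `k ^ λ₁ * (k') ^ (-1/2) * a₁''` of the integral in `a₂`, where
`a₁ = M * k ^ (-λ₁) * (k') ^ (-1/2)`. -/
noncomputable def entropySource (M lam : ℝ) (k : ℝ → ℝ) (ρ : ℝ) : ℝ :=
  entropyWeight lam k ρ * deriv (deriv fun s ↦ M * entropyWeight (-lam) k s) ρ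

variable [IsPositiveEnd l]

lemma HasPowerExpansion.of_contDiffOn_Ioi {C : ℝ} {r : ℝ → ℝ} (hr : ContDiffOn ℝ n r (Ioi 0))
    (hf : ∀ᶠ x in l, f x = c * x ^ m * (1 + r x) ∧
      ∀ j ≤ n, |iteratedDeriv j r x| ≤ C * x ^ (δ - j)) :
    HasPowerExpansion l n c m δ f := by
  have hpos : ∀ᶠ x in l, 0 < x := IsPositiveEnd.eventually_pos
  refine ⟨r, ⟨hpos.mono fun x hx ↦ hr.contDiffAt (Ioi_mem_nhds hx), fun j hj ↦ .of_bound C ?_⟩,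
    hf.mono fun _ h ↦ h.1⟩
  filter_upwards [hf, hpos] with x hx hx0
  simpa [abs_of_nonneg (Real.rpow_nonneg hx0.le _)] using hx.2 j hj

variable (hδ : Tendsto (fun x : ℝ ↦ x ^ δ) l (𝓝 0))
include hδ

lemma HasPowerExpansion.sqrt_deriv_div (hP : HasPowerExpansion l (n + 1) c m δ P)
    (hc : 0 < c) (hm : 0 < m) :
    HasPowerExpansion l n √(c * m) ((m - 1) / 2 - 1) δ fun x ↦ √(deriv P x) / x := by
  have hsqrt := (hP.deriv hc.ne' hm.ne').rpow hδ (mul_pos hc hm) (1 / 2)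
  have hdiv := hsqrt.mul hδ (hasPowerExpansion_rpow n (-1) δ)
  rw [mul_one, ← Real.sqrt_eq_rpow, show 1 / 2 * (m - 1) + -1 = (m - 1) / 2 - 1 by ring] at hdiv
  refine hdiv.congr (.of_forall fun x ↦ ?_)
  simp only [Real.sqrt_eq_rpow, Real.rpow_neg_one, div_eq_mul_inv _ x]

lemma HasPowerExpansion.entropyWeight (hk : HasPowerExpansion l (n + 1) c θ δ k)
    (hc : 0 < c) (hθ : 0 < θ) (μ : ℝ) :
    HasPowerExpansion l n (c ^ μ * (c * θ) ^ (-(1 : ℝ) / 2)) (μ * θ - (θ - 1) / 2) δ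
      (entropyWeight μ k) := by
  have hweight := ((hk.of_le n.le_succ).rpow hδ hc μ).mul hδ
    ((hk.deriv hc.ne' hθ.ne').rpow hδ (mul_pos hc hθ) (-(1 : ℝ) / 2))
  rwa [show μ * θ + -(1 : ℝ) / 2 * (θ - 1) = μ * θ - (θ - 1) / 2 by ring] at hweight

end EntropyWeight

section LargeDensity

variable {n : ℕ} {c θ ε lam M m : ℝ} {k P a b I : ℝ → ℝ}

lemma HasPowerExpansion.antideriv_sqrt_deriv_div_atTop {κ γ : ℝ} (hκ : 0 < κ) (hγ : 1 < γ)
    (hε : 0 < ε) (hεγ : ε < (γ - 1) / 2) (hP : HasPowerExpansion atTop (n + 1) κ γ (-ε) P)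
    (hk : ∀ᶠ ρ in atTop, HasDerivAt k (√(deriv P ρ) / ρ) ρ) :
    HasPowerExpansion atTop (n + 1) (√(κ * γ) / ((γ - 1) / 2)) ((γ - 1) / 2) (-ε) k := by
  have hθ : 0 < (γ - 1) / 2 := by linarith
  have hspeed := hP.sqrt_deriv_div (tendsto_rpow_neg_atTop hε) hκ (by linarith)
  rw [← div_mul_cancel₀ √(κ * γ) hθ.ne'] at hspeed
  exact .of_hasDerivAt_atTop (by positivity) (by linarith) hk hspeed

lemma isSymbol_antideriv_entropySource_atTop (hε : 0 < ε) (hc : 0 < c) (hθ : 0 < θ)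
    (hk : HasPowerExpansion atTop (n + 3) c θ (-ε) k)
    (hI : ∀ᶠ ρ in atTop, HasDerivAt I (entropySource M lam k ρ) ρ) :
    IsSymbol atTop (n + 1) 0 I := by
  have hweight (μ : ℝ) : IsSymbol atTop (n + 2) (μ * θ - (θ - 1) / 2) (entropyWeight μ k) :=
    (hk.entropyWeight (tendsto_rpow_neg_atTop hε) hc hθ μ).isSymbol (tendsto_rpow_neg_atTop hε)
  have hsource : IsSymbol atTop n _ (entropySource M lam k) :=
    ((hweight lam).of_le (by lia)).mul ((hweight (-lam)).const_mul M).deriv.deriv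
  rw [show lam * θ - (θ - 1) / 2 + (-lam * θ - (θ - 1) / 2 - 1 - 1) = -θ - 1 by ring] at hsource
  refine .of_hasDerivAt hI (hsource.mono (isBigO_rpow_rpow_atTop (by linarith))) ?_
  simpa [hθ.le] using isBigO_rpow_max_of_hasDerivAt_atTop (neg_ne_zero.2 hθ.ne') hI hsource.isBigO

lemma isSymbol_entropyCoefficients_atTop {κ γ : ℝ} (d : ℝ) (hκ : 0 < κ) (hγ : 1 < γ)
    (hθ : θ = (γ - 1) / 2) (hε : 0 < ε) (hP : HasPowerExpansion atTop 4 κ γ (-ε) P)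
    (hk : ∀ᶠ ρ in atTop, HasDerivAt k (√(deriv P ρ) / ρ) ρ)
    (hI : ∀ᶠ ρ in atTop, HasDerivAt I (entropySource M lam k ρ) ρ) :
    IsSymbol atTop 2 (-lam * θ - (θ - 1) / 2) (fun ρ ↦ M * entropyWeight (-lam) k ρ) ∧
      IsSymbol atTop 2 (-lam * θ - (θ - 1) / 2 - θ)
        (fun ρ ↦ d * (entropyWeight (-lam - 1) k ρ * I ρ)) := by
  have hθ0 : 0 < θ := by linarith
  obtain ⟨η, hη, hηmin⟩ := exists_between (lt_min hε hθ0)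
  obtain ⟨hηε, hηθ⟩ := lt_min_iff.1 hηmin
  have hk4 := (hP.mono (isBigO_rpow_rpow_atTop (neg_le_neg hηε.le))).antideriv_sqrt_deriv_div_atTop
    hκ hγ hη (hθ ▸ hηθ) hk
  rw [← hθ] at hk4
  have hc : 0 < √(κ * γ) / θ := by positivity
  have hweight (μ : ℝ) : IsSymbol atTop 3 (μ * θ - (θ - 1) / 2) (entropyWeight μ k) :=
    (hk4.entropyWeight (tendsto_rpow_neg_atTop hη) hc hθ0 μ).isSymbol (tendsto_rpow_neg_atTop hη)
  have hI0 : IsSymbol atTop 2 0 I := isSymbol_antideriv_entropySource_atTop hη hc hθ0 hk4 hI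
  have hb := (((hweight (-lam - 1)).of_le (by norm_num)).mul hI0).const_mul d
  rw [show (-lam - 1) * θ - (θ - 1) / 2 + 0 = -lam * θ - (θ - 1) / 2 - θ by ring] at hb
  exact ⟨((hweight (-lam)).of_le (by norm_num)).const_mul M, hb⟩

lemma IsSymbol.exists_eventually_sum_derivs_le (ha : IsSymbol atTop 2 m a)
    (hb : IsSymbol atTop 2 (m - θ) b) :
    ∃ C, 0 < C ∧ ∀ᶠ ρ in atTop,
      |a ρ| + ρ * |deriv a ρ| + ρ ^ 2 * |deriv (deriv a) ρ| ≤ C * ρ ^ m ∧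
      |b ρ| + ρ * |deriv b ρ| + ρ ^ 2 * |deriv (deriv b) ρ| ≤ C * ρ ^ (m - θ) ∧
      |a ρ| + ρ ^ θ * |b ρ| ≤ C * ρ ^ m := by
  obtain ⟨A, hA, hAa⟩ := ha.exists_sum_pow_mul_abs_iteratedDeriv_le
  obtain ⟨B, hB, hBb⟩ := hb.exists_sum_pow_mul_abs_iteratedDeriv_le
  refine ⟨A + B, by positivity, ?_⟩
  filter_upwards [hAa, hBb, eventually_gt_atTop 0] with ρ hAρ hBρ hρ
  simp only [Finset.sum_range_succ, Finset.sum_range_zero, zero_add, iteratedDeriv_zero,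
    iteratedDeriv_succ, pow_zero, pow_one, one_mul] at hAρ hBρ
  have hrescale : ρ ^ θ * ρ ^ (m - θ) = ρ ^ m := by rw [← Real.rpow_add hρ, add_sub_cancel]
  have ha0 : |a ρ| ≤ A * ρ ^ m :=
    le_trans (by rw [add_assoc]; exact le_add_of_nonneg_right (by positivity)) hAρ
  have hb0 : |b ρ| ≤ B * ρ ^ (m - θ) :=
    le_trans (by rw [add_assoc]; exact le_add_of_nonneg_right (by positivity)) hBρ
  refine ⟨hAρ.trans ?_, hBρ.trans ?_, ?_⟩
  · gcongr
    exact le_add_of_nonneg_right hB.le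
  · gcongr
    exact le_add_of_nonneg_left hA.le
  · calc |a ρ| + ρ ^ θ * |b ρ| ≤ A * ρ ^ m + ρ ^ θ * (B * ρ ^ (m - θ)) := by gcongr
      _ = (A + B) * ρ ^ m := by rw [← hrescale]; ring

end LargeDensity

section IntegralsFromZero

variable {m x : ℝ} {f : ℝ → ℝ}

lemma intervalIntegrable_zero_of_isBigO_rpow (hm : 0 < m) (hf : ContinuousOn f (Ioi 0))
    (hO : f =O[𝓝[>] 0] fun y ↦ y ^ (m - 1)) (hx : 0 < x) : IntervalIntegrable f volume 0 x := by
  have hmeas : StronglyMeasurableAtFilter f (𝓝[>] 0) :=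
    ⟨Ioi 0, self_mem_nhdsWithin, hf.aestronglyMeasurable measurableSet_Ioi⟩
  have hpow : IntegrableAtFilter (fun y : ℝ ↦ y ^ (m - 1)) (𝓝[>] 0) :=
    ⟨Ioc 0 1, Ioc_mem_nhdsGT one_pos, (intervalIntegrable_iff_integrableOn_Ioc_of_le zero_le_one).1
      (intervalIntegral.intervalIntegrable_rpow' (by linarith))⟩
  obtain ⟨s, hs, hfs⟩ := hO.integrableAtFilter hmeas hpow
  obtain ⟨u, hu, hus⟩ := mem_nhdsGT_iff_exists_Ioc_subset.1 hs
  have hleft : IntervalIntegrable f volume 0 u :=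
    (intervalIntegrable_iff_integrableOn_Ioc_of_le (le_of_lt hu)).2 (hfs.mono_set hus)
  have hright : IntervalIntegrable f volume u x :=
    (hf.mono fun _ hy ↦ (lt_min hu hx).trans_le hy.1).intervalIntegrable
  exact hleft.trans hright

lemma hasDerivAt_integral_zero_of_isBigO_rpow (hm : 0 < m) (hf : ContinuousOn f (Ioi 0))
    (hO : f =O[𝓝[>] 0] fun y ↦ y ^ (m - 1)) (hx : 0 < x) :
    HasDerivAt (fun y ↦ ∫ t in (0 : ℝ)..y, f t) (f x) x :=
  intervalIntegral.integral_hasDerivAt_right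
    (intervalIntegrable_zero_of_isBigO_rpow hm hf hO hx)
    (hf.stronglyMeasurableAtFilter isOpen_Ioi x hx) (hf.continuousAt (Ioi_mem_nhds hx))

lemma tendsto_integral_nhdsGT_zero_of_isBigO_rpow (hm : 0 < m) (hf : ContinuousOn f (Ioi 0))
    (hO : f =O[𝓝[>] 0] fun y ↦ y ^ (m - 1)) :
    Tendsto (fun y ↦ ∫ t in (0 : ℝ)..y, f t) (𝓝[>] 0) (𝓝 0) := by
  have hcont := intervalIntegral.continuousOn_primitive_interval'
    (intervalIntegrable_zero_of_isBigO_rpow hm hf hO one_pos) left_mem_uIcc 0 left_mem_uIcc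
  rw [uIcc_of_le zero_le_one] at hcont
  simpa using (hcont.mono_of_mem_nhdsWithin (Icc_mem_nhdsGT one_pos)).tendsto

lemma integral_zero_pos_of_isBigO_rpow (hm : 0 < m) (hf : ContinuousOn f (Ioi 0))
    (hf0 : ∀ y, 0 < y → 0 < f y) (hO : f =O[𝓝[>] 0] fun y ↦ y ^ (m - 1)) (hx : 0 < x) :
    0 < ∫ t in (0 : ℝ)..x, f t :=
  intervalIntegral.intervalIntegral_pos_of_pos_on
    (intervalIntegrable_zero_of_isBigO_rpow hm hf hO hx) (fun y hy ↦ hf0 y hy.1) hx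

lemma contDiffOn_integral_zero_of_isBigO_rpow {n : ℕ} (hm : 0 < m)
    (hf : ContDiffOn ℝ n f (Ioi 0)) (hO : f =O[𝓝[>] 0] fun y ↦ y ^ (m - 1)) :
    ContDiffOn ℝ (n + 1) (fun x ↦ ∫ t in (0 : ℝ)..x, f t) (Ioi 0) := fun _ hx ↦
  (contDiffAt_succ_of_eventually_hasDerivAt ((lt_mem_nhds hx).mono fun _ hy ↦
      hasDerivAt_integral_zero_of_isBigO_rpow hm hf.continuousOn hO hy)
    (hf.contDiffAt (Ioi_mem_nhds hx))).contDiffWithinAt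

lemma HasPowerExpansion.integral_zero {n : ℕ} {c δ : ℝ} (hc : c ≠ 0) (hm : 0 < m) (hδ : 0 < δ)
    (hf : ContinuousOn f (Ioi 0)) (hf0 : HasPowerExpansion (𝓝[>] 0) n (c * m) (m - 1) δ f) :
    HasPowerExpansion (𝓝[>] 0) (n + 1) c m δ fun x ↦ ∫ t in (0 : ℝ)..x, f t := by
  have hO := (hf0.isSymbol (tendsto_rpow_nhdsGT_zero hδ)).isBigO
  refine .of_hasDerivAt_nhdsGT_zero hc hm (by positivity) ?_
    (tendsto_integral_nhdsGT_zero_of_isBigO_rpow hm hf hO) hf0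
  filter_upwards [self_mem_nhdsWithin] with x hx
  exact hasDerivAt_integral_zero_of_isBigO_rpow hm hf hO hx

end IntegralsFromZero

section VacuumConvergence

variable {n : ℕ} {c δ θ lam M : ℝ} {k P : ℝ → ℝ}

lemma contDiffOn_sqrt_deriv_div (hP : ContDiffOn ℝ (n + 1) P (Ioi 0))
    (hP' : ∀ ρ, 0 < ρ → 0 < deriv P ρ) : ContDiffOn ℝ n (fun ρ ↦ √(deriv P ρ) / ρ) (Ioi 0) :=
  ((hP.deriv_of_isOpen isOpen_Ioi le_rfl).sqrt fun ρ hρ ↦ (hP' ρ hρ).ne').div contDiffOn_id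
    fun _ hρ ↦ ne_of_gt hρ

lemma contDiffOn_entropyWeight (hk : ContDiffOn ℝ (n + 1) k (Ioi 0))
    (hk0 : ∀ ρ, 0 < ρ → 0 < k ρ) (hk' : ∀ ρ, 0 < ρ → 0 < deriv k ρ) (μ : ℝ) :
    ContDiffOn ℝ n (entropyWeight μ k) (Ioi 0) :=
  ((hk.of_le (mod_cast n.le_succ)).rpow_const_of_ne fun ρ hρ ↦ (hk0 ρ hρ).ne').mul
    ((hk.deriv_of_isOpen isOpen_Ioi le_rfl).rpow_const_of_ne fun ρ hρ ↦ (hk' ρ hρ).ne')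

lemma isBigO_entropySource_nhdsGT_zero (hc : 0 < c) (hθ : 0 < θ) (hδ : 0 < δ)
    (hlam : lam * θ = (1 - θ) / 2) (hk : HasPowerExpansion (𝓝[>] 0) 3 c θ δ k) :
    entropySource M lam k =O[𝓝[>] 0] fun ρ ↦ ρ ^ (δ - θ - 1) := by
  have hδ0 := tendsto_rpow_nhdsGT_zero hδ
  have hleading := hk.entropyWeight hδ0 hc hθ (-lam)
  rw [show -lam * θ - (θ - 1) / 2 = 0 by linarith] at hleading
  have hleading'' := hleading.isSymbol_deriv_of_exponent_zero.deriv.const_mul M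
  have hsource := isBigO_mul_rpow_add
    ((hk.entropyWeight hδ0 hc hθ lam).isSymbol hδ0).isBigO hleading''.isBigO
  rw [show lam * θ - (θ - 1) / 2 + (δ - 1 - 1) = δ - θ - 1 by linarith] at hsource
  refine hsource.congr_left fun ρ ↦ ?_
  simp only [entropySource, deriv_const_mul_field']

lemma hasDerivAt_integral_entropySource (hc : 0 < c) (hθ : 0 < θ) (hδ : θ < δ)
    (hlam : lam * θ = (1 - θ) / 2) (hk : HasPowerExpansion (𝓝[>] 0) 3 c θ δ k)
    (hkC : ContDiffOn ℝ 3 k (Ioi 0)) (hk0 : ∀ ρ, 0 < ρ → 0 < k ρ)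
    (hk' : ∀ ρ, 0 < ρ → 0 < deriv k ρ) {ρ : ℝ} (hρ : 0 < ρ) :
    HasDerivAt (fun ρ ↦ ∫ s in (0 : ℝ)..ρ, entropySource M lam k s)
      (entropySource M lam k ρ) ρ := by
  have hweight (μ : ℝ) : ContDiffOn ℝ 2 (entropyWeight μ k) (Ioi 0) :=
    contDiffOn_entropyWeight (n := 2) (by exact_mod_cast hkC) hk0 hk' μ
  have hleading'' : ContinuousOn (deriv (deriv fun s ↦ M * entropyWeight (-lam) k s)) (Ioi 0) :=
    ((contDiffOn_const.mul (hweight (-lam))).deriv_of_isOpen (m := 1) isOpen_Ioi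
      (by norm_num)).continuousOn_deriv_of_isOpen isOpen_Ioi le_rfl
  exact hasDerivAt_integral_zero_of_isBigO_rpow (sub_pos.2 hδ)
    ((hweight lam).continuousOn.mul hleading'')
    (isBigO_entropySource_nhdsGT_zero hc hθ (hθ.trans hδ) hlam hk) hρ

lemma hasDerivAt_integral_entropySource_of_pressure {κ γ : ℝ} (hκ : 0 < κ) (hγ : 1 < γ)
    (hθ : θ = (γ - 1) / 2) (hδ : θ < δ) (hlam : lam = (3 - γ) / (2 * (γ - 1)))
    (hP : ContDiffOn ℝ 3 P (Ioi 0)) (hP' : ∀ ρ, 0 < ρ → 0 < deriv P ρ)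
    (hP0 : HasPowerExpansion (𝓝[>] 0) 3 κ γ δ P)
    (hk : k = fun ρ ↦ ∫ y in (0 : ℝ)..ρ, √(deriv P y) / y) {ρ : ℝ} (hρ : 0 < ρ) :
    HasDerivAt k (√(deriv P ρ) / ρ) ρ ∧
      HasDerivAt (fun ρ ↦ ∫ s in (0 : ℝ)..ρ, entropySource M lam k s)
        (entropySource M lam k ρ) ρ := by
  have hθ0 : 0 < θ := by linarith
  have hδ0 := tendsto_rpow_nhdsGT_zero (hθ0.trans hδ)
  have hspeed := hP0.sqrt_deriv_div hδ0 hκ (by linarith)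
  rw [← hθ, ← div_mul_cancel₀ √(κ * γ) hθ0.ne'] at hspeed
  have hspeedO := (hspeed.isSymbol hδ0).isBigO
  have hspeedC : ContDiffOn ℝ 2 (fun ρ ↦ √(deriv P ρ) / ρ) (Ioi 0) :=
    contDiffOn_sqrt_deriv_div (n := 2) (by exact_mod_cast hP) hP'
  have hspeed_pos (y : ℝ) (hy : 0 < y) : 0 < √(deriv P y) / y :=
    div_pos (Real.sqrt_pos.2 (hP' y hy)) hy
  have hkC : ContDiffOn ℝ 3 k (Ioi 0) := by
    rw [hk]
    exact_mod_cast contDiffOn_integral_zero_of_isBigO_rpow (n := 2) hθ0 hspeedC hspeedO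
  have hkderiv (y : ℝ) (hy : 0 < y) : HasDerivAt k (√(deriv P y) / y) y := by
    rw [hk]
    exact hasDerivAt_integral_zero_of_isBigO_rpow hθ0 hspeedC.continuousOn hspeedO hy
  have hkexp : HasPowerExpansion (𝓝[>] 0) 3 (√(κ * γ) / θ) θ δ k := by
    rw [hk]
    exact .integral_zero (by positivity) hθ0 (hθ0.trans hδ) hspeedC.continuousOn hspeed
  refine ⟨hkderiv ρ hρ, hasDerivAt_integral_entropySource (by positivity) hθ0 hδ ?_ hkexp hkC
    (fun y hy ↦ ?_) (fun y hy ↦ ?_) hρ⟩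
  · rw [hlam, hθ]
    field [(sub_pos.2 hγ).ne']
  · rw [hk]
    exact integral_zero_pos_of_isBigO_rpow hθ0 hspeedC.continuousOn hspeed_pos hspeedO hy
  · rw [(hkderiv y hy).deriv]
    exact hspeed_pos y hy

end VacuumConvergence

theorem entropy_kernel_coefficients_large_density_general {P k a₁ a₂ : ℝ → ℝ}
    {κ₁ κ₂ γ₁ γ₂ δ ε lam M c θ₁ θ₂ : ℝ} (R : ℝ)
    (hP : ContDiffOn ℝ 3 P (Ioi 0)) (hP' : ∀ ρ, 0 < ρ → 0 < deriv P ρ)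
    (hκ₁ : 0 < κ₁) (hγ₁ : 1 < γ₁) (hθ₁ : θ₁ = (γ₁ - 1) / 2) (hδ : θ₁ < δ)
    (hP0 : HasPowerExpansion (𝓝[>] 0) 3 κ₁ γ₁ δ P)
    (hκ₂ : 0 < κ₂) (hγ₂ : 1 < γ₂) (hθ₂ : θ₂ = (γ₂ - 1) / 2) (hε : 0 < ε)
    (hPtop : HasPowerExpansion atTop 4 κ₂ γ₂ (-ε) P)
    (hlam : lam = (3 - γ₁) / (2 * (γ₁ - 1)))
    (hk : ∀ ρ, k ρ = ∫ y in (0 : ℝ)..ρ, √(deriv P y) / y)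
    (ha₁ : ∀ ρ, a₁ ρ = M * k ρ ^ (-lam) * deriv k ρ ^ (-(1 : ℝ) / 2))
    (ha₂ : ∀ ρ, a₂ ρ = c * k ρ ^ (-lam - 1) * deriv k ρ ^ (-(1 : ℝ) / 2) *
      ∫ s in (0 : ℝ)..ρ, k s ^ lam * deriv k s ^ (-(1 : ℝ) / 2) * deriv (deriv a₁) s) :
    ∃ C : ℝ, 0 < C ∧ ∃ ρbar : ℝ, R ≤ ρbar ∧ ∀ ρ : ℝ, ρbar ≤ ρ →
      (|a₁ ρ| + ρ * |deriv a₁ ρ| + ρ ^ 2 * |deriv (deriv a₁) ρ|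
        ≤ C * ρ ^ ((1 : ℝ) / 2 - θ₂ / (2 * θ₁))) ∧
      (|a₂ ρ| + ρ * |deriv a₂ ρ| + ρ ^ 2 * |deriv (deriv a₂) ρ|
        ≤ C * ρ ^ ((1 : ℝ) / 2 - θ₂ - θ₂ / (2 * θ₁))) ∧
      (|a₁ ρ| + ρ ^ θ₂ * |a₂ ρ| ≤ C * ρ ^ ((1 : ℝ) / 2 - θ₂ / (2 * θ₁))) := by
  have hk_fun : k = fun ρ ↦ ∫ y in (0 : ℝ)..ρ, √(deriv P y) / y := funext hk
  obtain rfl : a₁ = fun ρ ↦ M * entropyWeight (-lam) k ρ :=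
    funext fun ρ ↦ (ha₁ ρ).trans (mul_assoc _ _ _)
  obtain rfl : a₂ = fun ρ ↦ c * (entropyWeight (-lam - 1) k ρ * ∫ s in (0 : ℝ)..ρ,
      entropySource M lam k s) :=
    funext fun ρ ↦ (ha₂ ρ).trans (by simp only [entropySource, entropyWeight, mul_assoc])
  have hderivs : ∀ᶠ ρ in atTop, _ ∧ _ := (eventually_gt_atTop 0).mono fun ρ hρ ↦
    hasDerivAt_integral_entropySource_of_pressure (M := M) hκ₁ hγ₁ hθ₁ hδ hlam hP hP' hP0 hk_fun hρ
  obtain ⟨hsymbol₁, hsymbol₂⟩ := isSymbol_entropyCoefficients_atTop c hκ₂ hγ₂ hθ₂ hε hPtop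
    (hderivs.mono fun _ h ↦ h.1) (hderivs.mono fun _ h ↦ h.2)
  have hexponent : -lam * θ₂ - (θ₂ - 1) / 2 = 1 / 2 - θ₂ / (2 * θ₁) := by
    rw [hlam, hθ₁]
    field [(sub_pos.2 hγ₁).ne']
  obtain ⟨C, hC, hbound⟩ := hsymbol₁.exists_eventually_sum_derivs_le hsymbol₂
  obtain ⟨ρbar, hbar⟩ := eventually_atTop.1 hbound
  refine ⟨C, hC, max R ρbar, le_max_left _ _, fun ρ hρ ↦ ?_⟩
  rw [sub_right_comm, ← hexponent]
  exact hbar ρ (le_of_max_le_right hρ)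

theorem entropy_kernel_coefficients_large_density
    (P Q₁ Q₂ : ℝ → ℝ) (ρstar ρss γ₁ γ₂ κ₁ κ₂ Cs Css εe : ℝ)
    (hPC1 : ContDiffOn ℝ 1 P (Ici 0))
    (hPC4 : ContDiffOn ℝ 4 P (Ioi 0))
    (hH1 : ∀ ρ : ℝ, 0 < ρ → 0 < deriv P ρ ∧ 0 < 2 * deriv P ρ + ρ * deriv (deriv P) ρ)
    (hρstar : 0 < ρstar) (hγ₁ : 1 < γ₁) (hγ₁3 : γ₁ < 3) (hκ₁ : 0 < κ₁) (hCs : 0 < Cs)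
    (hQ₁C4 : ContDiffOn ℝ 4 Q₁ (Ioi 0))
    (hPsmall : ∀ ρ ∈ Ico (0:ℝ) ρstar, P ρ = κ₁ * ρ ^ γ₁ * (1 + Q₁ ρ))
    (hQ₁bd : ∀ ρ ∈ Ioo (0:ℝ) ρstar, ∀ j : ℕ, j ≤ 4 →
      |iteratedDeriv j Q₁ ρ| ≤ Cs * ρ ^ (γ₁ - 1 - (j : ℝ)))
    (hρss : ρstar < ρss) (hγ₂ : 6/5 < γ₂) (hγ₂1 : γ₂ ≤ γ₁) (hκ₂ : 0 < κ₂)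
    (hεe : 0 < εe) (hCss : 0 < Css)
    (hQ₂C4 : ContDiffOn ℝ 4 Q₂ (Ioi 0))
    (hPlarge : ∀ ρ : ℝ, ρss ≤ ρ → P ρ = κ₂ * ρ ^ γ₂ * (1 + Q₂ ρ))
    (hQ₂bd : ∀ ρ : ℝ, ρss ≤ ρ → ∀ j : ℕ, j ≤ 4 →
      |iteratedDeriv j Q₂ ρ| ≤ Css * ρ ^ (-εe - (j : ℝ)))
    (lam₁ Mlam θ₁ θ₂ : ℝ)
    (hlam₁ : lam₁ = (3 - γ₁) / (2 * (γ₁ - 1)))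
    (hMlam : Mlam = (2 * lam₁ / Real.sqrt (2 * lam₁ + 1) * ∫ z in (-1:ℝ)..1, (1 - z ^ 2) ^ lam₁)⁻¹)
    (hθ₁ : θ₁ = (γ₁ - 1) / 2) (hθ₂ : θ₂ = (γ₂ - 1) / 2)
    (k a₁ a₂ : ℝ → ℝ)
    (hk : ∀ ρ : ℝ, k ρ = ∫ y in (0:ℝ)..ρ, Real.sqrt (deriv P y) / y)
    (ha₁ : ∀ ρ : ℝ, a₁ ρ = Mlam * k ρ ^ (-lam₁) * deriv k ρ ^ (-(1:ℝ)/2))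
    (ha₂ : ∀ ρ : ℝ, a₂ ρ = -(4 * (lam₁ + 1))⁻¹ * k ρ ^ (-lam₁ - 1) * deriv k ρ ^ (-(1:ℝ)/2) *
      ∫ s in (0:ℝ)..ρ, k s ^ lam₁ * deriv k s ^ (-(1:ℝ)/2) * deriv (deriv a₁) s) :
    ∃ C : ℝ, 0 < C ∧ ∃ ρbar : ℝ, ρss ≤ ρbar ∧ ∀ ρ : ℝ, ρbar ≤ ρ →
      (|a₁ ρ| + ρ * |deriv a₁ ρ| + ρ ^ 2 * |deriv (deriv a₁) ρ|
        ≤ C * ρ ^ ((1:ℝ)/2 - θ₂ / (2 * θ₁))) ∧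
      (|a₂ ρ| + ρ * |deriv a₂ ρ| + ρ ^ 2 * |deriv (deriv a₂) ρ|
        ≤ C * ρ ^ ((1:ℝ)/2 - θ₂ - θ₂ / (2 * θ₁))) ∧
      (|a₁ ρ| + ρ ^ θ₂ * |a₂ ρ| ≤ C * ρ ^ ((1:ℝ)/2 - θ₂ / (2 * θ₁))) := by
  have hP0 : HasPowerExpansion (𝓝[>] 0) 4 κ₁ γ₁ (γ₁ - 1) P := by
    refine .of_contDiffOn_Ioi (C := Cs) hQ₁C4 ?_
    filter_upwards [Ioo_mem_nhdsGT hρstar] with ρ hρ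
    exact ⟨hPsmall ρ (Ioo_subset_Ico_self hρ), hQ₁bd ρ hρ⟩
  have hPtop : HasPowerExpansion atTop 4 κ₂ γ₂ (-εe) P := by
    refine .of_contDiffOn_Ioi (C := Css) hQ₂C4 ?_
    filter_upwards [eventually_ge_atTop ρss] with ρ hρ
    exact ⟨hPlarge ρ hρ, hQ₂bd ρ hρ⟩
  exact entropy_kernel_coefficients_large_density_general ρss (hPC4.of_le (by norm_num))
    (fun ρ hρ ↦ (hH1 ρ hρ).1) hκ₁ hγ₁ hθ₁ (by linarith) (hP0.of_le (by norm_num)) hκ₂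
    (by linarith) hθ₂ hεe hPtop hlam₁ hk ha₁ ha₂
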